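/- Define φ(k) = 1 - k + (π/2) ∫_0^∞ (csch(π u / 2))² · (1 - (1+u²)^{k/2} cos(k arctan u)) du for complex k where the integral converges. Then for every complex k with Re(k) < 2 which is not a pole of the Gamma factor, -2 · Γ(k+1) · (2^{1-k} - 1) · π^{-k} · cos(π k / 2) · ζ(k) = φ(k), where ζ is the Riemann zeta function. -/

import Mathlib

open MeasureTheory Complex Real

/-- The paper's function φ, defined by an integral over (0, ∞); here
`(1+u²)^{k/2} cos(k arctan u)` is formalized as `((1+iu)^k + (1-iu)^k)/2`. -/
noncomputable def phi (k : ℂ) : ℂ :=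
  1 - k + (π / 2) *
    ∫ u in Set.Ioi (0 : ℝ),
      ((1 / Real.sinh (π * u / 2) : ℝ) : ℂ) ^ 2 *
        (1 - ((1 + Complex.I * u) ^ k + (1 - Complex.I * u) ^ k) / 2)

section
open Filter Topology

/-- A parameter integral of holomorphic functions is holomorphic, provided the integrand is locally
bounded, uniformly in the parameter, by an integrable function. -/
theorem differentiableOn_integral_of_locally_dominated {α : Type*} [MeasurableSpace α]
    {μ : Measure α} {F : ℂ → α → ℂ} {U : Set ℂ} (hU : IsOpen U)
    (hmeas : ∀ z ∈ U, AEStronglyMeasurable (F z) μ)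
    (hdiff : ∀ᵐ t ∂μ, DifferentiableOn ℂ (fun z ↦ F z t) U)
    (hbound : ∀ z₀ ∈ U, ∃ V ∈ 𝓝 z₀, ∃ g : α → ℝ, Integrable g μ ∧
      ∀ᵐ t ∂μ, ∀ z ∈ V, ‖F z t‖ ≤ g t) :
    DifferentiableOn ℂ (fun z ↦ ∫ t, F z t ∂μ) U := by
  intro z₀ hz₀
  obtain ⟨V, hV, g, hg, hFg⟩ := hbound z₀ hz₀
  obtain ⟨r, hr, hrV⟩ := Metric.mem_nhds_iff.1 (inter_mem hV (hU.mem_nhds hz₀))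
  have hsub : ∀ z ∈ Metric.ball z₀ (r / 2), Metric.closedBall z (r / 3) ⊆ V ∩ U := by
    intro z hz w hw
    apply hrV
    rw [Metric.mem_ball] at *
    rw [Metric.mem_closedBall] at hw
    linarith [dist_triangle w z z₀]
  have hz₀ball : z₀ ∈ Metric.ball z₀ (r / 2) := Metric.mem_ball_self (by positivity)
  have hderiv : ∀ᵐ t ∂μ, ∀ z ∈ Metric.ball z₀ (r / 2),
      HasDerivAt (fun z ↦ F z t) (deriv (fun z ↦ F z t) z) z := by
    filter_upwards [hdiff] with t ht z hz
    have hzU : z ∈ U := (hsub z hz (Metric.mem_closedBall_self (by positivity))).2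
    exact (ht.differentiableAt (hU.mem_nhds hzU)).hasDerivAt
  have hderiv_le : ∀ᵐ t ∂μ, ∀ z ∈ Metric.ball z₀ (r / 2),
      ‖deriv (fun z ↦ F z t) z‖ ≤ g t / (r / 3) := by
    filter_upwards [hdiff, hFg] with t ht htg z hz
    refine Complex.norm_deriv_le_of_forall_mem_sphere_norm_le (by positivity) ?_ ?_
    · refine (ht.mono fun w hw ↦ ?_).diffContOnCl
      exact (hsub z hz (Metric.closure_ball_subset_closedBall hw)).2
    · intro w hw
      exact htg w (hsub z hz (Metric.sphere_subset_closedBall hw)).1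
  have hmeas_nhds : ∀ᶠ z in 𝓝 z₀, AEStronglyMeasurable (F z) μ := by
    filter_upwards [hU.mem_nhds hz₀] with z hz using hmeas z hz
  have hint : Integrable (F z₀) μ := by
    refine hg.mono' (hmeas z₀ hz₀) ?_
    filter_upwards [hFg] with t ht using ht z₀ (mem_of_mem_nhds hV)
  have hmeas' : AEStronglyMeasurable (fun t ↦ deriv (fun z ↦ F z t) z₀) μ := by
    have hseq : Tendsto (fun n : ℕ ↦ z₀ + ((r / 3 / ((n : ℝ) + 1) : ℝ) : ℂ)) atTop (𝓝[≠] z₀) := by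
      refine tendsto_nhdsWithin_iff.2 ⟨?_, Eventually.of_forall fun n ↦ ?_⟩
      · have h : Tendsto (fun n : ℕ ↦ (r / 3) / ((n : ℝ) + 1)) atTop (𝓝 0) :=
          tendsto_const_nhds.div_atTop (tendsto_natCast_atTop_atTop.atTop_add tendsto_const_nhds)
        have h2 := (Complex.continuous_ofReal.tendsto 0).comp h
        simpa using h2.const_add z₀
      · have : (r / 3 / ((n : ℝ) + 1)) ≠ 0 := by positivity
        simpa using (ofReal_ne_zero.2 this)
    refine aestronglyMeasurable_of_tendsto_ae atTop
      (f := fun (n : ℕ) t ↦ slope (fun z ↦ F z t) z₀ (z₀ + ((r / 3 / ((n : ℝ) + 1) : ℝ) : ℂ)))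
      (fun n ↦ ?_) ?_
    · simp only [slope_def_field, div_eq_mul_inv]
      refine ((hmeas _ ?_).sub (hmeas z₀ hz₀)).mul_const _
      refine (hsub z₀ hz₀ball ?_).2
      rw [Metric.mem_closedBall, dist_eq_norm, add_sub_cancel_left, norm_real, Real.norm_eq_abs,
        abs_of_pos (by positivity)]
      exact div_le_self (by positivity) (by linarith [(Nat.cast_nonneg n : (0 : ℝ) ≤ n)])
    · filter_upwards [hderiv] with t ht
      exact (hasDerivAt_iff_tendsto_slope.1 (ht z₀ hz₀ball)).comp hseq
  exact (hasDerivAt_integral_of_dominated_loc_of_deriv_le (Metric.ball_mem_nhds z₀ (half_pos hr))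
    hmeas_nhds hint hmeas' hderiv_le (hg.div_const _) hderiv).2.differentiableAt
      |>.differentiableWithinAt

theorem integrableOn_rpow_mul_exp_neg_mul {s b : ℝ} (hs : -1 < s) (hb : 0 < b) :
    IntegrableOn (fun t : ℝ ↦ t ^ s * Real.exp (-b * t)) (Set.Ioi 0) := by
  simpa using integrableOn_rpow_mul_exp_neg_mul_rpow hs one_pos hb

theorem aestronglyMeasurable_cpow_mul_exp (a z : ℂ) :
    AEStronglyMeasurable (fun t : ℝ ↦ (t : ℂ) ^ a * Complex.exp (-(t * z)))
      (volume.restrict (Set.Ioi 0)) := by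
  refine ContinuousOn.aestronglyMeasurable (fun t ht ↦ ?_) measurableSet_Ioi
  refine ContinuousAt.continuousWithinAt (ContinuousAt.mul ?_ (by fun_prop))
  exact continuousAt_ofReal_cpow_const _ _ (Or.inr (ne_of_gt ht))

theorem norm_cpow_mul_exp (a z : ℂ) {t : ℝ} (ht : 0 < t) :
    ‖(t : ℂ) ^ a * Complex.exp (-(t * z))‖ = t ^ a.re * Real.exp (-(t * z.re)) := by
  rw [norm_mul, Complex.norm_cpow_eq_rpow_re_of_pos ht, Complex.norm_exp]
  simp

theorem integrableOn_cpow_mul_exp {a z : ℂ} (ha : -1 < a.re) (hz : 0 < z.re) :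
    IntegrableOn (fun t : ℝ ↦ (t : ℂ) ^ a * Complex.exp (-(t * z))) (Set.Ioi 0) := by
  refine (integrableOn_rpow_mul_exp_neg_mul ha hz).mono' (aestronglyMeasurable_cpow_mul_exp a z) ?_
  filter_upwards [ae_restrict_mem measurableSet_Ioi] with t ht
  rw [norm_cpow_mul_exp a z ht]
  ring_nf
  exact le_rfl

/-- Euler's integral for the Gamma function along a rotated ray. -/
theorem integral_cpow_mul_exp_neg_mul_complex {a z : ℂ} (ha : 0 < a.re) (hz : 0 < z.re) :
    ∫ t in Set.Ioi (0 : ℝ), (t : ℂ) ^ (a - 1) * Complex.exp (-(t * z)) =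
      z ^ (-a) * Complex.Gamma a := by
  have hU : IsOpen {z : ℂ | 0 < z.re} := isOpen_lt continuous_const Complex.continuous_re
  have hleft : DifferentiableOn ℂ (fun z : ℂ ↦ ∫ t in Set.Ioi (0 : ℝ),
      (t : ℂ) ^ (a - 1) * Complex.exp (-(t * z))) {z : ℂ | 0 < z.re} := by
    refine differentiableOn_integral_of_locally_dominated hU
      (fun z _ ↦ aestronglyMeasurable_cpow_mul_exp _ z)
      (Eventually.of_forall fun t ↦ by fun_prop) fun z₀ hz₀ ↦ ?_
    have hz₀' : z₀.re / 2 < z₀.re := half_lt_self hz₀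
    refine ⟨{z : ℂ | z₀.re / 2 < z.re},
      (isOpen_lt continuous_const Complex.continuous_re).mem_nhds hz₀', _,
      integrableOn_rpow_mul_exp_neg_mul (s := (a - 1).re) (b := z₀.re / 2) (by simpa using ha)
        (half_pos hz₀), ?_⟩
    filter_upwards [ae_restrict_mem measurableSet_Ioi] with t ht z hz
    have ht' : 0 < t := ht
    have hz' : z₀.re / 2 < z.re := hz
    rw [norm_cpow_mul_exp _ z ht]
    gcongr
    nlinarith
  have hright : DifferentiableOn ℂ (fun z : ℂ ↦ z ^ (-a) * Complex.Gamma a)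
      {z : ℂ | 0 < z.re} := by
    intro z hz
    exact ((differentiableAt_id.cpow_const (Or.inl hz)).mul_const _).differentiableWithinAt
  refine (hleft.analyticOnNhd hU).eqOn_of_preconnected_of_frequently_eq
    (hright.analyticOnNhd hU) (convex_halfSpace_re_gt 0).isPreconnected (z₀ := 1) (by simp) ?_ hz
  have htend : Tendsto (fun x : ℝ ↦ (x : ℂ)) (𝓝[≠] 1) (𝓝[≠] 1) := by
    refine tendsto_nhdsWithin_iff.2 ⟨?_, ?_⟩
    · exact (Complex.continuous_ofReal.tendsto' 1 1 (by simp)).mono_left nhdsWithin_le_nhds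
    · filter_upwards [self_mem_nhdsWithin] with x hx
      simpa using hx
  refine htend.frequently (Eventually.frequently ?_)
  filter_upwards [nhdsWithin_le_nhds (lt_mem_nhds (zero_lt_one' ℝ))] with r hr
  have h := Complex.integral_cpow_mul_exp_neg_mul_Ioi ha hr
  rw [one_div, inv_cpow _ _ (by rw [arg_ofReal_of_nonneg hr.le]; exact pi_pos.ne),
    ← cpow_neg] at h
  rw [← h]
  simp only [mul_comm]

/-- The weight `csch² (π u / 2)`. -/
noncomputable def cschSq (u : ℝ) : ℝ := (1 / Real.sinh (π * u / 2)) ^ 2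

theorem cschSq_nonneg (u : ℝ) : 0 ≤ cschSq u := sq_nonneg _

theorem measurable_cschSq : Measurable cschSq := by
  unfold cschSq
  fun_prop

theorem mul_exp_half_le_two_mul_sinh {x : ℝ} (hx : 0 ≤ x) :
    x * Real.exp (x / 2) ≤ 2 * Real.sinh x := by
  have h1 : x / 2 ≤ Real.sinh (x / 2) := Real.self_le_sinh_iff.2 (by positivity)
  have h2 : Real.exp (x / 2) ≤ 2 * Real.cosh (x / 2) := by
    rw [Real.cosh_eq]
    linarith [Real.exp_pos (-(x / 2))]
  have h3 : Real.sinh x = 2 * Real.sinh (x / 2) * Real.cosh (x / 2) := by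
    rw [← Real.sinh_two_mul]
    ring_nf
  rw [h3]
  nlinarith [Real.exp_pos (x / 2), mul_le_mul h1 h2 (Real.exp_pos _).le (by linarith)]

theorem cschSq_mul_sq_le {u : ℝ} (hu : 0 < u) :
    cschSq u * u ^ 2 ≤ 16 / π ^ 2 * Real.exp (-(π / 2) * u) := by
  have hx : 0 < π * u / 2 := by positivity
  have h := mul_exp_half_le_two_mul_sinh hx.le
  have hs : 0 < Real.sinh (π * u / 2) := Real.sinh_pos_iff.2 hx
  have hsq : (π * u / 2 * Real.exp (π * u / 2 / 2)) ^ 2 ≤ (2 * Real.sinh (π * u / 2)) ^ 2 := by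
    gcongr
  have he : Real.exp (-(π / 2) * u) * Real.exp (π * u / 2 / 2) ^ 2 = 1 := by
    rw [← Real.exp_nat_mul, ← Real.exp_add, Real.exp_eq_one_iff]
    push_cast
    ring
  rw [cschSq, div_pow, one_pow, div_mul_eq_mul_div, one_mul, div_mul_eq_mul_div,
    div_le_div_iff₀ (by positivity) (by positivity)]
  have h4 := mul_le_mul_of_nonneg_left hsq (Real.exp_pos (-(π / 2) * u)).le
  have h5 : Real.exp (-(π / 2) * u) * (π * u / 2 * Real.exp (π * u / 2 / 2)) ^ 2 =
      (π * u / 2) ^ 2 := by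
    rw [mul_pow, mul_left_comm, he, mul_one]
  rw [h5] at h4
  nlinarith

theorem integrableOn_cschSq_mul_sq :
    IntegrableOn (fun u ↦ cschSq u * u ^ 2) (Set.Ioi 0) := by
  refine ((integrableOn_exp_mul_Ioi (a := -(π / 2)) (by linarith [pi_pos]) 0).const_mul
    (16 / π ^ 2)).mono' (measurable_cschSq.mul (by fun_prop)).aestronglyMeasurable ?_
  filter_upwards [ae_restrict_mem measurableSet_Ioi] with u hu
  rw [Real.norm_of_nonneg (mul_nonneg (cschSq_nonneg u) (sq_nonneg u))]
  exact cschSq_mul_sq_le hu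

theorem hasSum_cschSq {u : ℝ} (hu : 0 < u) :
    HasSum (fun n : ℕ ↦ 4 * ((n : ℝ) + 1) * Real.exp (-((n + 1) * π) * u)) (cschSq u) := by
  have hr : Real.exp (-(π * u)) < 1 := by
    rw [← Real.exp_zero]
    exact Real.exp_lt_exp.2 (by linarith [mul_pos pi_pos hu])
  have h := (hasSum_coe_mul_geometric_of_norm_lt_one (r := Real.exp (-(π * u)))
    (by rwa [Real.norm_of_nonneg (Real.exp_pos _).le])).mul_left 4
  rw [← hasSum_nat_add_iff' 1] at h
  convert! h using 1
  · ext n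
    rw [← Real.exp_nat_mul]
    push_cast
    ring_nf
  · have hs : 0 < Real.sinh (π * u / 2) := Real.sinh_pos_iff.2 (by positivity)
    have he : Real.exp (-(π * u)) = Real.exp (-(π * u / 2)) ^ 2 := by
      rw [← Real.exp_nat_mul]
      push_cast
      ring_nf
    have hm : Real.exp (π * u / 2) * Real.exp (-(π * u / 2)) = 1 := by
      rw [← Real.exp_add]
      simp
    have h1 : 1 - Real.exp (-(π * u)) =
        2 * Real.sinh (π * u / 2) * Real.exp (-(π * u / 2)) := by
      rw [Real.sinh_eq, he]
      linear_combination -hm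
    have hpos := Real.exp_pos (-(π * u / 2))
    rw [h1, he, cschSq]
    simp
    field_simp
    norm_num

theorem integrableOn_exp_mul_one_sub_cos {a : ℝ} (ha : 0 < a) (t : ℝ) :
    IntegrableOn (fun u ↦ Real.exp (-a * u) * (1 - Real.cos (t * u))) (Set.Ioi 0) := by
  refine ((integrableOn_exp_mul_Ioi (a := -a) (by linarith) 0).mul_const 2).mono'
    (by fun_prop) (Eventually.of_forall fun u ↦ ?_)
  rw [norm_mul, Real.norm_of_nonneg (Real.exp_pos _).le,
    Real.norm_of_nonneg (by linarith [Real.cos_le_one (t * u)])]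
  gcongr
  linarith [Real.neg_one_le_cos (t * u)]

theorem integral_exp_mul_one_sub_cos {a : ℝ} (ha : 0 < a) (t : ℝ) :
    ∫ u in Set.Ioi (0 : ℝ), Real.exp (-a * u) * (1 - Real.cos (t * u)) =
      t ^ 2 / (a * (a ^ 2 + t ^ 2)) := by
  have hre : ((-a : ℂ) + t * I).re < 0 := by simpa using ha
  have hint := integrableOn_exp_mul_complex_Ioi hre 0
  have h := integral_exp_mul_complex_Ioi hre 0
  have hcos : ∫ u in Set.Ioi (0 : ℝ), Real.exp (-a * u) * Real.cos (t * u) =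
      a / (a ^ 2 + t ^ 2) := by
    have h2 := congrArg Complex.re h
    have h3 := integral_re hint
    simp only [RCLike.re_to_complex] at h3
    rw [← h3] at h2
    convert! h2 using 1
    · refine integral_congr_ae (Eventually.of_forall fun u ↦ ?_)
      simp [Complex.exp_re]
    · simp [Complex.div_re, Complex.normSq_apply]
      ring_nf
  have hi1 := integrableOn_exp_mul_Ioi (a := -a) (by linarith) 0
  have hi2 : IntegrableOn (fun u ↦ Real.exp (-a * u) * Real.cos (t * u)) (Set.Ioi 0) := by
    have := hi1.sub (integrableOn_exp_mul_one_sub_cos ha t)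
    refine this.congr (Eventually.of_forall fun u ↦ ?_)
    simp only [Pi.sub_apply]
    ring
  simp only [mul_sub, mul_one]
  rw [integral_sub hi1 hi2, hcos, integral_exp_mul_Ioi (by linarith)]
  have : 0 < a ^ 2 + t ^ 2 := by positivity
  simp
  field_simp
  ring

theorem summable_sq_div_add_sq (t : ℝ) :
    Summable fun n : ℕ ↦ 4 / π * (t ^ 2 / (((n + 1) * π) ^ 2 + t ^ 2)) := by
  have hs : Summable fun n : ℕ ↦ t ^ 2 / π ^ 2 * (1 / ((n + 1 : ℕ) : ℝ) ^ 2) :=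
    ((summable_nat_add_iff 1).2 (Real.summable_one_div_nat_pow.2 one_lt_two)).mul_left _
  refine (hs.of_nonneg_of_le (fun n ↦ by positivity) fun n ↦ ?_).mul_left _
  rw [div_mul_div_comm, mul_one]
  push_cast
  gcongr
  nlinarith [sq_nonneg t]

theorem hasSum_integral_cschSq_mul_one_sub_cos (t : ℝ) :
    HasSum (fun n : ℕ ↦ 4 / π * (t ^ 2 / (((n + 1) * π) ^ 2 + t ^ 2)))
      (∫ u in Set.Ioi (0 : ℝ), cschSq u * (1 - Real.cos (t * u))) := by
  have hpos (n : ℕ) : 0 < ((n : ℝ) + 1) * π := by positivity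
  let F (n : ℕ) (u : ℝ) : ℝ :=
    4 * ((n : ℝ) + 1) * (Real.exp (-((n + 1) * π) * u) * (1 - Real.cos (t * u)))
  have hF (n : ℕ) : ∫ u in Set.Ioi (0 : ℝ), F n u =
      4 / π * (t ^ 2 / (((n + 1) * π) ^ 2 + t ^ 2)) := by
    simp only [F]
    rw [integral_const_mul, integral_exp_mul_one_sub_cos (hpos n)]
    have := pi_pos
    have h2 : 0 < (((n : ℝ) + 1) * π) ^ 2 + t ^ 2 := by positivity
    field_simp
  have hFnn (n : ℕ) (u : ℝ) : 0 ≤ F n u :=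
    mul_nonneg (by positivity) (mul_nonneg (Real.exp_pos _).le
      (by linarith [Real.cos_le_one (t * u)]))
  have h := hasSum_integral_of_summable_integral_norm (μ := volume.restrict (Set.Ioi 0)) (F := F)
    (fun n ↦ (integrableOn_exp_mul_one_sub_cos (hpos n) t).const_mul _)
    (by
      simp only [Real.norm_of_nonneg (hFnn _ _), hF]
      exact summable_sq_div_add_sq t)
  simp only [hF] at h
  convert! h using 1
  refine setIntegral_congr_fun measurableSet_Ioi fun u hu ↦ ?_
  have hsum := (hasSum_cschSq hu).mul_right (1 - Real.cos (t * u))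
  simp only [F, ← mul_assoc]
  exact hsum.tsum_eq.symm

/-- The cosine transform of `csch²`, in exponential form of `t coth t - 1`. -/
theorem integral_cschSq_mul_one_sub_cos {t : ℝ} (ht : 0 < t) :
    ((π / 2 * ∫ u in Set.Ioi (0 : ℝ), cschSq u * (1 - Real.cos (t * u)) : ℝ) : ℂ) =
      2 * t * ∑' n : ℕ, Complex.exp (-(2 * n * t)) - t - 1 := by
  have hz : 0 < ((t : ℂ) * I / π).im := by
    rw [Complex.div_ofReal_im]
    simpa using div_pos ht pi_pos
  have hpi : (π : ℂ) ≠ 0 := ofReal_ne_zero.2 pi_pos.ne'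
  have htc : (t : ℂ) ≠ 0 := ofReal_ne_zero.2 ht.ne'
  have hcot := pi_mul_cot_pi_q_exp ⟨_, hz⟩
  have hser := cot_series_rep' (UpperHalfPlane.coe_mem_integerComplement ⟨_, hz⟩)
  change π * cot (π * (t * I / π)) = π * I - 2 * π * I *
    ∑' n : ℕ, Complex.exp (2 * π * I * (t * I / π)) ^ n at hcot
  change π * cot (π * (t * I / π)) - 1 / (t * I / π) =
    ∑' n : ℕ, (1 / (t * I / π - (n + 1)) + 1 / (t * I / π + (n + 1))) at hser
  have hexp : ∀ n : ℕ, Complex.exp (2 * π * I * (t * I / π)) ^ n =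
      Complex.exp (-(2 * n * t)) := by
    intro n
    rw [← Complex.exp_nat_mul]
    congr 1
    field_simp
    linear_combination n * I_sq
  simp only [hexp] at hcot
  have hS := ((hasSum_integral_cschSq_mul_one_sub_cos t).mul_left (π / 2)).tsum_eq
  rw [← hS, ofReal_tsum]
  have hterm : ∀ n : ℕ, 1 / (t * I / π - (n + 1)) + 1 / (t * I / π + (n + 1)) =
      -(π * I / t) *
        ((π / 2 * (4 / π * (t ^ 2 / ((((n : ℝ) + 1) * π) ^ 2 + t ^ 2))) : ℝ) : ℂ) := by
    intro n
    have h1 : (t * I / π - (n + 1) : ℂ) ≠ 0 := fun h ↦ by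
      have := congrArg Complex.im h
      simp at this
      simp [this] at hz
    have h2 : (t * I / π + (n + 1) : ℂ) ≠ 0 := fun h ↦ by
      have := congrArg Complex.im h
      simp at this
      simp [this] at hz
    have h3 : ((((n : ℂ) + 1) * π) ^ 2 + t ^ 2 : ℂ) ≠ 0 := by
      have : 0 < (((n : ℝ) + 1) * π) ^ 2 + t ^ 2 := by positivity
      exact_mod_cast this.ne'
    have hprod : (t * I / π - (n + 1) : ℂ) * (t * I / π + (n + 1)) =
        -((((n : ℂ) + 1) * π) ^ 2 + t ^ 2) / π ^ 2 := by
      field_simp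
      linear_combination t ^ 2 * I_sq
    push_cast
    rw [div_add_div _ _ h1 h2, hprod]
    generalize (((n : ℂ) + 1) * π) ^ 2 + t ^ 2 = D at h3
    field_simp
    ring
  simp only [hterm] at hser
  rw [tsum_mul_left, hcot] at hser
  set A := ∑' n : ℕ, ((π / 2 * (4 / π * (t ^ 2 / ((((n : ℝ) + 1) * π) ^ 2 + t ^ 2))) : ℝ) : ℂ)
  set S := ∑' n : ℕ, Complex.exp (-(2 * n * t))
  field_simp at hser
  rw [I_sq] at hser
  linear_combination -hser

/-- The factor `1 - (1 + u²)^{k/2} cos (k arctan u)` of the integrand of `phi`. -/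
noncomputable def phiFactor (k : ℂ) (u : ℝ) : ℂ :=
  1 - ((1 + I * u) ^ k + (1 - I * u) ^ k) / 2

theorem phi_eq (k : ℂ) :
    phi k = 1 - k + π / 2 * ∫ u in Set.Ioi (0 : ℝ), (cschSq u : ℂ) * phiFactor k u := by
  simp only [phi, cschSq, phiFactor, ofReal_pow]

theorem integral_cpow_mul_exp_neg {a : ℂ} (ha : 0 < a.re) :
    ∫ t in Set.Ioi (0 : ℝ), (t : ℂ) ^ (a - 1) * Complex.exp (-(t * 1)) = Complex.Gamma a := by
  rw [integral_cpow_mul_exp_neg_mul_complex ha (by simp), one_cpow, one_mul]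

theorem integral_cpow_mul_exp_mul_one_sub_cos {a : ℂ} (ha : 0 < a.re) (u : ℝ) :
    ∫ t in Set.Ioi (0 : ℝ), (t : ℂ) ^ (a - 1) * Complex.exp (-(t * 1)) *
      ((1 - Real.cos (t * u) : ℝ) : ℂ) = Complex.Gamma a * phiFactor (-a) u := by
  have ha' : -1 < (a - 1).re := by simpa using ha
  have h0 := integrableOn_cpow_mul_exp (z := 1) ha' (by simp)
  have h1 := integrableOn_cpow_mul_exp (z := 1 + I * u) ha' (by simp)
  have h2 := integrableOn_cpow_mul_exp (z := 1 - I * u) ha' (by simp)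
  have h12 : IntegrableOn (fun t : ℝ ↦ (t : ℂ) ^ (a - 1) * Complex.exp (-(t * (1 + I * u))) +
      (t : ℂ) ^ (a - 1) * Complex.exp (-(t * (1 - I * u)))) (Set.Ioi 0) := h1.add h2
  have hsplit : ∀ t : ℝ, (t : ℂ) ^ (a - 1) * Complex.exp (-(t * 1)) *
      ((1 - Real.cos (t * u) : ℝ) : ℂ) =
      (t : ℂ) ^ (a - 1) * Complex.exp (-(t * 1)) -
        ((t : ℂ) ^ (a - 1) * Complex.exp (-(t * (1 + I * u))) +
          (t : ℂ) ^ (a - 1) * Complex.exp (-(t * (1 - I * u)))) / 2 := by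
    intro t
    have e1 : Complex.exp (-(t * (1 + I * u))) =
        Complex.exp (-(t * 1)) * Complex.exp (-(t * u) * I) := by
      rw [← Complex.exp_add]
      ring_nf
    have e2 : Complex.exp (-(t * (1 - I * u))) =
        Complex.exp (-(t * 1)) * Complex.exp (t * u * I) := by
      rw [← Complex.exp_add]
      ring_nf
    rw [e1, e2]
    push_cast
    rw [Complex.cos]
    ring
  simp only [hsplit]
  rw [integral_sub h0 (h12.div_const 2), integral_div, integral_add h1 h2,
    integral_cpow_mul_exp_neg ha, integral_cpow_mul_exp_neg_mul_complex ha (by simp),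
    integral_cpow_mul_exp_neg_mul_complex ha (by simp), phiFactor]
  ring

theorem integrable_cschSq_mul_cpow_mul_one_sub_cos {a : ℂ} (ha : 0 < a.re) :
    Integrable (Function.uncurry fun u t : ℝ ↦ (cschSq u : ℂ) *
        ((t : ℂ) ^ (a - 1) * Complex.exp (-(t * 1)) * ((1 - Real.cos (t * u) : ℝ) : ℂ)))
      ((volume.restrict (Set.Ioi 0)).prod (volume.restrict (Set.Ioi 0))) := by
  have hb : IntegrableOn (fun t : ℝ ↦ t ^ (a.re + 1) * Real.exp (-1 * t)) (Set.Ioi 0) :=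
    integrableOn_rpow_mul_exp_neg_mul (by linarith) one_pos
  refine (integrableOn_cschSq_mul_sq.mul_prod hb).mono' ?_ ?_
  · have := measurable_cschSq
    refine Measurable.aestronglyMeasurable ?_
    unfold Function.uncurry
    fun_prop
  · rw [Measure.prod_restrict]
    filter_upwards [ae_restrict_mem (measurableSet_Ioi.prod measurableSet_Ioi)] with p hp
    obtain ⟨u, t⟩ := p
    have ht : 0 < t := hp.2
    have hcos : 1 - Real.cos (t * u) ≤ t ^ 2 * u ^ 2 := by
      nlinarith [Real.one_sub_sq_div_two_le_cos (x := t * u), sq_nonneg (t * u)]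
    have hrpow : t ^ (a.re + 1) = t ^ (a - 1).re * t ^ 2 := by
      rw [← Real.rpow_natCast t 2, ← Real.rpow_add ht]
      congr 1
      simp
      ring
    simp only [Function.uncurry]
    rw [norm_mul, norm_mul, norm_cpow_mul_exp _ _ ht, norm_real, norm_real,
      Real.norm_of_nonneg (cschSq_nonneg u),
      Real.norm_of_nonneg (by linarith [Real.cos_le_one (t * u)]), hrpow]
    calc _ ≤ cschSq u * (t ^ (a - 1).re * Real.exp (-(t * (1 : ℂ).re)) * (t ^ 2 * u ^ 2)) := by
          gcongr
          exact cschSq_nonneg u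
      _ = _ := by
          simp only [one_re]
          ring_nf

theorem tsum_one_div_odd_cpow {s : ℂ} (hs : 1 < s.re) :
    ∑' n : ℕ, 1 / ((2 * n + 1 : ℕ) : ℂ) ^ s = (1 - 2 ^ (-s)) * riemannZeta s := by
  have hsum : Summable fun n : ℕ ↦ 1 / (n : ℂ) ^ s := Complex.summable_one_div_nat_cpow.2 hs
  have heven : Function.Injective fun n : ℕ ↦ 2 * n := fun m n h ↦ by simpa using h
  have hodd : Function.Injective fun n : ℕ ↦ 2 * n + 1 := fun m n h ↦ by simpa using h
  have h := tsum_even_add_odd (f := fun n : ℕ ↦ 1 / (n : ℂ) ^ s) (hsum.comp_injective heven) (hsum.comp_injective hodd)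
  rw [← zeta_eq_tsum_one_div_nat_cpow hs] at h
  have h2 : ∑' n : ℕ, 1 / ((2 * n : ℕ) : ℂ) ^ s = 2 ^ (-s) * riemannZeta s := by
    rw [zeta_eq_tsum_one_div_nat_cpow hs, ← tsum_mul_left]
    refine tsum_congr fun n ↦ ?_
    rw [Nat.cast_mul, natCast_mul_natCast_cpow, cpow_neg]
    push_cast
    rw [one_div, one_div, mul_inv]
  rw [h2] at h
  linear_combination h

theorem mellin_exp_mul_tsum_exp {s : ℂ} (hs : 1 < s.re) :
    mellin (fun t : ℝ ↦ Complex.exp (-(t * 1)) * ∑' n : ℕ, Complex.exp (-(2 * n * t))) s =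
      Complex.Gamma s * ((1 - 2 ^ (-s)) * riemannZeta s) := by
  have hodd : Function.Injective fun n : ℕ ↦ 2 * n + 1 := fun m n h ↦ by simpa using h
  have h := hasSum_mellin (ι := ℕ) (a := fun _ ↦ 1) (p := fun n ↦ ((2 * n + 1 : ℕ) : ℝ))
    (F := fun t : ℝ ↦ Complex.exp (-(t * 1)) * ∑' n : ℕ, Complex.exp (-(2 * n * t))) (s := s)
    (fun n ↦ Or.inr (by positivity)) (by linarith) (fun t ht ↦ ?_) ?_
  · rw [← h.tsum_eq, ← tsum_one_div_odd_cpow hs, ← tsum_mul_left]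
    refine tsum_congr fun n ↦ ?_
    push_cast
    ring
  · have ht' : 0 < t := ht
    have hr : ‖Complex.exp (-(2 * t))‖ < 1 := by
      rw [Complex.norm_exp, ← Real.exp_zero]
      refine Real.exp_lt_exp.2 ?_
      simpa using ht'
    have hgeo := (summable_geometric_of_norm_lt_one hr).hasSum.mul_left
      (Complex.exp (-(t * 1)))
    convert! hgeo using 1
    · ext n
      rw [← Complex.exp_nat_mul, ← Complex.exp_add]
      push_cast
      ring_nf
    · congr 1
      refine tsum_congr fun n ↦ ?_
      rw [← Complex.exp_nat_mul]
      ring_nf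
  · have := (Real.summable_one_div_nat_rpow.2 hs).comp_injective hodd
    simpa [Function.comp_def] using this

theorem phi_of_re_neg {k : ℂ} (hk : k.re < 0) :
    phi k = -2 * k * ((1 - 2 ^ (k - 1)) * riemannZeta (1 - k)) := by
  obtain ⟨a, rfl⟩ : ∃ a, k = -a := ⟨-k, by simp⟩
  have ha : 0 < a.re := by simpa using hk
  have ha0 : a ≠ 0 := fun h ↦ by simp [h] at ha
  have hint := integrable_cschSq_mul_cpow_mul_one_sub_cos ha
  have hswap := integral_integral_swap hint
  simp only [integral_const_mul, integral_cpow_mul_exp_mul_one_sub_cos ha] at hswap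
  have hT := hint.integral_prod_right.const_mul (π / 2 : ℂ)
  simp only [Function.uncurry] at hT
  have hTeq : ∀ t ∈ Set.Ioi (0 : ℝ), (π / 2 : ℂ) * (∫ u in Set.Ioi (0 : ℝ), (cschSq u : ℂ) *
      ((t : ℂ) ^ (a - 1) * Complex.exp (-(t * 1)) * ((1 - Real.cos (t * u) : ℝ) : ℂ))) =
      2 * ((t : ℂ) ^ (a + 1 - 1) *
        (Complex.exp (-(t * 1)) * ∑' n : ℕ, Complex.exp (-(2 * n * t)))) -
      (t : ℂ) ^ (a + 1 - 1) * Complex.exp (-(t * 1)) -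
      (t : ℂ) ^ (a - 1) * Complex.exp (-(t * 1)) := by
    intro t ht
    have ht' : 0 < t := ht
    have hJ := integral_cschSq_mul_one_sub_cos ht'
    have hcomm : ∀ u : ℝ, (cschSq u : ℂ) *
        ((t : ℂ) ^ (a - 1) * Complex.exp (-(t * 1)) * ((1 - Real.cos (t * u) : ℝ) : ℂ)) =
        (t : ℂ) ^ (a - 1) * Complex.exp (-(t * 1)) *
          ((cschSq u * (1 - Real.cos (t * u)) : ℝ) : ℂ) := by
      intro u
      push_cast
      ring
    have hpow : (t : ℂ) ^ (a + 1 - 1) = (t : ℂ) ^ (a - 1) * t := by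
      rw [add_sub_right_comm, cpow_add _ _ (ofReal_ne_zero.2 ht'.ne'), cpow_one]
    simp only [hcomm]
    rw [integral_const_mul, integral_complex_ofReal, hpow]
    push_cast at hJ
    linear_combination (t : ℂ) ^ (a - 1) * Complex.exp (-(t * 1)) * hJ
  have hI0 := integrableOn_cpow_mul_exp (a := a - 1) (z := 1) (by simpa using ha) (by simp)
  have hI1 := integrableOn_cpow_mul_exp (a := a + 1 - 1) (z := 1) (by simp; linarith) (by simp)
  have hG1 := integral_cpow_mul_exp_neg (a := a + 1) (by simp; linarith)
  have hG0 := integral_cpow_mul_exp_neg ha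
  have hM := mellin_exp_mul_tsum_exp (s := a + 1) (by simpa using ha)
  have hT1 : IntegrableOn (fun t : ℝ ↦ π / 2 * (∫ u in Set.Ioi (0 : ℝ), (cschSq u : ℂ) *
      ((t : ℂ) ^ (a - 1) * Complex.exp (-(t * 1)) * ((1 - Real.cos (t * u) : ℝ) : ℂ))) +
      (t : ℂ) ^ (a + 1 - 1) * Complex.exp (-(t * 1))) (Set.Ioi 0) := hT.add hI1
  have hmain : 2 * mellin (fun t : ℝ ↦ Complex.exp (-(t * 1)) *
        ∑' n : ℕ, Complex.exp (-(2 * n * t))) (a + 1) =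
      π / 2 * (∫ u in Set.Ioi (0 : ℝ), (cschSq u : ℂ) * (Complex.Gamma a * phiFactor (-a) u)) +
        Complex.Gamma (a + 1) + Complex.Gamma a := by
    rw [hswap, ← hG0, ← hG1, ← integral_const_mul, ← integral_add hT hI1,
      ← integral_add hT1 hI0, mellin, ← integral_const_mul]
    refine setIntegral_congr_fun measurableSet_Ioi fun t ht ↦ ?_
    simp only [smul_eq_mul]
    rw [hTeq t ht]
    ring
  have hGne : Complex.Gamma a ≠ 0 := Complex.Gamma_ne_zero_of_re_pos ha
  simp only [mul_left_comm _ (Complex.Gamma a)] at hmain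
  rw [integral_const_mul, hM, Complex.Gamma_add_one a ha0] at hmain
  rw [phi_eq]
  have e1 : (-a - 1 : ℂ) = -(a + 1) := by ring
  have e2 : (1 - -a : ℂ) = a + 1 := by ring
  rw [e1, e2]
  refine mul_left_cancel₀ hGne ?_
  linear_combination -hmain

theorem norm_cpow_le_exp_of_re_eq_one {z w : ℂ} (hz : z.re = 1) (hw : w.re ≤ 0) :
    ‖z ^ w‖ ≤ Real.exp (π * |w.im|) := by
  have h1 : 1 ≤ ‖z‖ := by
    have := abs_re_le_norm z
    rwa [hz, abs_one] at this
  refine (Complex.norm_cpow_le z w).trans ?_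
  rw [div_eq_mul_inv, ← Real.exp_neg, ← one_mul (Real.exp (π * |w.im|))]
  gcongr
  · exact Real.rpow_le_one_of_one_le_of_nonpos h1 hw
  · refine (neg_le_abs _).trans ?_
    rw [abs_mul]
    gcongr
    exact abs_arg_le_pi z

theorem hasDerivAt_one_add_mul_cpow {c : ℂ} (hc : c.re = 0) (k : ℂ) (u : ℝ) :
    HasDerivAt (fun u : ℝ ↦ (1 + c * u) ^ k) (k * (1 + c * u) ^ (k - 1) * c) u := by
  have h : HasDerivAt (fun z : ℂ ↦ 1 + c * z) c (u : ℂ) := by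
    simpa using ((hasDerivAt_id (u : ℂ)).const_mul c).const_add 1
  exact (h.cpow_const (Or.inl (by simp [hc]))).comp_ofReal

theorem norm_phiFactor_le {k : ℂ} (hk : k.re < 2) {u : ℝ} (hu : 0 ≤ u) :
    ‖phiFactor k u‖ ≤ ‖k‖ * ‖k - 1‖ * Real.exp (π * |k.im|) * u ^ 2 := by
  set C := ‖k‖ * ‖k - 1‖ * Real.exp (π * |k.im|) with hC
  have hC0 : 0 ≤ C := by positivity
  let d (v : ℝ) : ℂ := -(k * (1 + I * v) ^ (k - 1) * I + k * (1 + -I * v) ^ (k - 1) * -I) / 2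
  have hh (v : ℝ) : HasDerivAt (phiFactor k) (d v) v := by
    have h := (((hasDerivAt_one_add_mul_cpow (c := I) (by simp) k v).add
      (hasDerivAt_one_add_mul_cpow (c := -I) (by simp) k v)).div_const 2).const_sub 1
    convert! h using 1
    · ext v
      simp [phiFactor, sub_eq_add_neg]
    · simp only [d]
      ring
  have hd (v : ℝ) : HasDerivAt d (k * (k - 1) *
      ((1 + I * v) ^ (k - 1 - 1) + (1 + -I * v) ^ (k - 1 - 1)) / 2) v := by
    have h := ((((hasDerivAt_one_add_mul_cpow (c := I) (by simp) (k - 1) v).const_mul k).mul_const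
      I).add (((hasDerivAt_one_add_mul_cpow (c := -I) (by simp) (k - 1) v).const_mul k).mul_const
      (-I))).neg.div_const 2
    convert! h using 1
    linear_combination (k * (k - 1) *
      ((1 + I * v) ^ (k - 1 - 1) + (1 + -I * v) ^ (k - 1 - 1)) / 2) * I_sq
  have hd_le (v : ℝ) : ‖d v‖ ≤ C * ‖v‖ := by
    have h := convex_univ.norm_image_sub_le_of_norm_hasDerivWithin_le (f := d) (x := 0) (y := v)
      (C := C) (fun w _ ↦ (hd w).hasDerivWithinAt) (fun w _ ↦ ?_) (Set.mem_univ _) (Set.mem_univ _)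
    · simpa [d] using h
    · have him : (k - 1 - 1).im = k.im := by simp
      have e1 := norm_cpow_le_exp_of_re_eq_one (z := 1 + I * w) (w := k - 1 - 1) (by simp)
        (by simp; linarith)
      have e2 := norm_cpow_le_exp_of_re_eq_one (z := 1 + -I * w) (w := k - 1 - 1) (by simp)
        (by simp; linarith)
      rw [him] at e1 e2
      rw [norm_div, norm_mul, norm_mul, hC, div_le_iff₀ (by simp), mul_assoc (‖k‖ * ‖k - 1‖)]
      gcongr
      refine (norm_add_le _ _).trans ?_
      simp only [RCLike.norm_ofNat]
      linarith
  have h := (convex_Icc 0 u).norm_image_sub_le_of_norm_hasDerivWithin_le (f := phiFactor k)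
    (x := 0) (y := u) (C := C * u) (fun w _ ↦ (hh w).hasDerivWithinAt) (fun w hw ↦ ?_)
    (Set.left_mem_Icc.2 hu) (Set.right_mem_Icc.2 hu)
  · rw [sub_zero, Real.norm_of_nonneg hu] at h
    have h0 : phiFactor k 0 = 0 := by simp [phiFactor]
    rw [h0, sub_zero] at h
    linarith
  · refine (hd_le w).trans ?_
    rw [Real.norm_of_nonneg hw.1]
    gcongr
    exact hw.2

theorem differentiableOn_phi : DifferentiableOn ℂ phi {k | k.re < 2} := by
  have hU : IsOpen {k : ℂ | k.re < 2} := isOpen_lt Complex.continuous_re continuous_const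
  have hne (u : ℝ) {c : ℂ} (hc : c.re = 0) : 1 + c * u ≠ 0 := fun h ↦ by
    simpa [hc] using congrArg Complex.re h
  have hint : DifferentiableOn ℂ
      (fun k ↦ ∫ u in Set.Ioi (0 : ℝ), (cschSq u : ℂ) * phiFactor k u) {k | k.re < 2} := by
    refine differentiableOn_integral_of_locally_dominated hU (fun k _ ↦ ?_)
      (Eventually.of_forall fun u ↦ ?_) fun k₀ hk₀ ↦ ?_
    · have := measurable_cschSq
      refine Measurable.aestronglyMeasurable ?_
      unfold phiFactor
      fun_prop
    · have h1 : Differentiable ℂ fun k : ℂ ↦ (1 + I * u) ^ k :=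
        differentiable_id.const_cpow (Or.inl (hne u (by simp)))
      have h2 : Differentiable ℂ fun k : ℂ ↦ (1 - I * u) ^ k :=
        differentiable_id.const_cpow (Or.inl (by
          simpa [sub_eq_add_neg] using hne u (c := -I) (by simp)))
      exact ((((h1.add h2).div_const 2).const_sub 1).const_mul _).differentiableOn
    · refine ⟨_, inter_mem (Metric.ball_mem_nhds k₀ one_pos) (hU.mem_nhds hk₀), _,
        integrableOn_cschSq_mul_sq.const_mul
          ((‖k₀‖ + 1) * (‖k₀‖ + 2) * Real.exp (π * (‖k₀‖ + 1))), ?_⟩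
      filter_upwards [ae_restrict_mem measurableSet_Ioi] with u hu k hk
      have hdist := mem_ball_iff_norm.1 hk.1
      have hk1 : ‖k‖ ≤ ‖k₀‖ + 1 := by linarith [norm_sub_norm_le k k₀]
      have hk2 : ‖k - 1‖ ≤ ‖k₀‖ + 2 := by
        have := norm_sub_le k 1
        rw [norm_one] at this
        linarith
      have hk3 : |k.im| ≤ ‖k₀‖ + 1 := (abs_im_le_norm k).trans hk1
      rw [norm_mul, norm_real, Real.norm_of_nonneg (cschSq_nonneg u), mul_left_comm]
      refine mul_le_mul_of_nonneg_left ((norm_phiFactor_le hk.2 (le_of_lt hu)).trans ?_)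
        (cschSq_nonneg u)
      gcongr
  refine ((differentiableOn_id.const_sub 1).add (hint.const_mul (π / 2 : ℂ))).congr fun k _ ↦ ?_
  exact phi_eq k

theorem differentiable_update_mul_riemannZeta_one_sub :
    Differentiable ℂ (Function.update (fun k ↦ k * riemannZeta (1 - k)) 0 (-1)) := by
  rw [← differentiableOn_univ,
    ← Complex.differentiableOn_compl_singleton_and_continuousAt_iff (c := 0) univ_mem]
  constructor
  · intro k hk
    have hk0 : k ≠ 0 := hk.2
    have hd : DifferentiableAt ℂ (fun k ↦ k * riemannZeta (1 - k)) k := by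
      refine differentiableAt_id.mul ?_
      exact (differentiableAt_riemannZeta (by simpa using hk0)).comp k (by fun_prop)
    refine (hd.congr_of_eventuallyEq ?_).differentiableWithinAt
    filter_upwards [isOpen_ne.mem_nhds hk0] with z hz
    exact Function.update_of_ne hz _ _
  · rw [continuousAt_update_same]
    have hsub : Tendsto (fun k : ℂ ↦ 1 - k) (𝓝[≠] 0) (𝓝[≠] 1) := by
      refine tendsto_nhdsWithin_iff.2 ⟨?_, ?_⟩
      · exact ((continuous_const.sub continuous_id).tendsto' (0 : ℂ) 1 (by simp)).mono_left
          nhdsWithin_le_nhds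
      · filter_upwards [self_mem_nhdsWithin] with k hk
        simpa using hk
    refine (riemannZeta_residue_one.comp hsub).neg.congr fun k ↦ ?_
    simp only [Function.comp_apply]
    ring

theorem phi_eq_update_mul_riemannZeta {k : ℂ} (hk : k.re < 2) :
    phi k = -2 * (1 - 2 ^ (k - 1)) *
      Function.update (fun k ↦ k * riemannZeta (1 - k)) 0 (-1) k := by
  have hU : IsOpen {k : ℂ | k.re < 2} := isOpen_lt Complex.continuous_re continuous_const
  have hpow : Differentiable ℂ fun k : ℂ ↦ (2 : ℂ) ^ (k - 1) :=
    (differentiable_id.sub_const 1).const_cpow (Or.inl two_ne_zero)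
  have hright := (((hpow.const_sub 1).const_mul (-2)).mul
    differentiable_update_mul_riemannZeta_one_sub).differentiableOn (s := {k : ℂ | k.re < 2})
  refine (differentiableOn_phi.analyticOnNhd hU).eqOn_of_preconnected_of_eventuallyEq
    (hright.analyticOnNhd hU) (convex_halfSpace_re_lt 2).isPreconnected (z₀ := -1)
    (by simp; norm_num) ?_ hk
  have hneg : IsOpen {k : ℂ | k.re < 0} := isOpen_lt Complex.continuous_re continuous_const
  filter_upwards [hneg.mem_nhds (by simp : (-1 : ℂ) ∈ {k : ℂ | k.re < 0})] with k hk
  have hk0 : k ≠ 0 := fun h ↦ by simp [h] at hk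
  rw [phi_of_re_neg hk]
  simp only [Pi.mul_apply, Function.update_of_ne hk0]
  ring

end

theorem stmt8 (k : ℂ) (hre : k.re < 2) (hk : ∀ n : ℕ, k ≠ -(n + 1 : ℂ)) :
    -2 * Complex.Gamma (k + 1) * ((2 : ℂ) ^ ((1 : ℂ) - k) - 1) * (π : ℂ) ^ (-k) *
        Complex.cos (π * k / 2) * riemannZeta k = phi k := by
  rw [phi_eq_update_mul_riemannZeta hre]
  rcases eq_or_ne k 0 with rfl | hk0
  · rw [Function.update_self]
    simp [riemannZeta_zero, cpow_neg]
    norm_num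
  rw [Function.update_of_ne hk0]
  rcases eq_or_ne k 1 with rfl | hk1
  · simp
  have hpole (n : ℕ) : k ≠ -n := by
    rcases n with _ | n
    · simpa using hk0
    · simpa using hk n
  have h2pi : (2 * π : ℂ) ^ (-k) = 2 ^ (-k) * (π : ℂ) ^ (-k) := by
    simpa using mul_cpow_ofReal_nonneg zero_le_two pi_pos.le (-k)
  have hpow : (2 : ℂ) ^ k * 2 ^ (-k) = 1 := by
    rw [← cpow_add _ _ two_ne_zero]
    simp
  rw [riemannZeta_one_sub hpole hk1, Complex.Gamma_add_one k hk0, h2pi,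
    sub_eq_add_neg 1 k, cpow_add _ _ two_ne_zero, cpow_sub _ _ two_ne_zero, cpow_one]
  linear_combination (-2 * k * (π : ℂ) ^ (-k) * Complex.Gamma k * Complex.cos (π * k / 2) *
    riemannZeta k) * hpow
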